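/- Let ρ̄ > 0, δ ∈ (0, ρ̄), Γ > 2, and let p : [0, ρ̄) → ℝ be continuously differentiable with p(ρ) ≥ 0 and p'(ρ) > 0 for 0 < ρ < ρ̄, and suppose in addition p(ρ̄ − δ) > 0. Define p_δ : [0, ∞) → ℝ by p_δ(ρ) = p(ρ) + δρ² for 0 ≤ ρ ≤ ρ̄ − δ, and p_δ(ρ) = (ρ − ρ̄ + δ)^Γ + p(ρ̄ − δ) + p'(ρ̄ − δ)(ρ − ρ̄ + δ) + δρ² for ρ > ρ̄ − δ. Then for every ρ ≥ ρ̄ one has ρ ≤ (1/p'(ρ̄ − δ) + ρ̄/p(ρ̄ − δ)) · p_δ(ρ). -/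

import Mathlib

open Set

/-- The approximate pressure `p_δ` of the approximation scheme (A3):
`p_δ(ρ) = p(ρ) + δρ²` for `0 ≤ ρ ≤ R − δ`, and
`p_δ(ρ) = (ρ − R + δ)^Γ + p(R − δ) + p'(R − δ)(ρ − R + δ) + δρ²` for `ρ > R − δ`,
where `R = ρ̄` is the critical density. -/
noncomputable def pdelta (R δ Γ : ℝ) (p p' : ℝ → ℝ) (ρ : ℝ) : ℝ :=
  if ρ ≤ R - δ then p ρ + δ * ρ ^ 2
  else (ρ - R + δ) ^ Γ + p (R - δ) + p' (R - δ) * (ρ - R + δ) + δ * ρ ^ 2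

/-! From `ρ̄ - δ` on, the power and the quadratic term only add to the tangent line of `p` at
`ρ̄ - δ`. Its linear part controls the excess `ρ - (ρ̄ - δ)`, its constant part the remaining
density, which is at most `ρ̄`. -/

theorem add_le_one_div_add_div_mul {K : Type*} [Field K] [LinearOrder K] [IsStrictOrderedRing K]
    {a b c t y : K} (ha : 0 < a) (hb : 0 < b) (hc : 0 ≤ c) (hay : a ≤ y) (hbty : b * t ≤ y) :
    t + c ≤ (1 / b + c / a) * y := by
  have ht : t ≤ 1 / b * y := by
    rwa [one_div_mul_eq_div, le_div_iff₀' hb]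
  have hc_le : c ≤ c / a * y := by
    rw [div_mul_eq_mul_div, le_div_iff₀ ha]
    exact mul_le_mul_of_nonneg_left hay hc
  rw [add_mul]
  exact add_le_add ht hc_le

theorem tangent_le_pdelta {R δ ρ : ℝ} (Γ : ℝ) (p p' : ℝ → ℝ) (hδ : 0 ≤ δ) (hρ : R - δ ≤ ρ) :
    p (R - δ) + p' (R - δ) * (ρ - R + δ) ≤ pdelta R δ Γ p p' ρ := by
  have hquad : 0 ≤ δ * ρ ^ 2 := by positivity
  rcases hρ.eq_or_lt with rfl | hlt
  · simpa [pdelta] using hquad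
  · have hpow : 0 ≤ (ρ - R + δ) ^ Γ := Real.rpow_nonneg (by linarith) Γ
    rw [pdelta, if_neg hlt.not_ge]
    linarith

theorem density_dominated_by_pdelta_general {R δ : ℝ} (Γ : ℝ) {p p' : ℝ → ℝ}
    (hR : 0 ≤ R) (hδ : 0 ≤ δ) (_hderiv : HasDerivAt p (p' (R - δ)) (R - δ))
    (hp : 0 < p (R - δ)) (hp' : 0 < p' (R - δ)) {ρ : ℝ} (hρ : R - δ ≤ ρ) :
    ρ ≤ (1 / p' (R - δ) + R / p (R - δ)) * pdelta R δ Γ p p' ρ := by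
  have htangent := tangent_le_pdelta Γ p p' hδ hρ
  have hslope : 0 ≤ p' (R - δ) * (ρ - R + δ) := mul_nonneg hp'.le (by linarith)
  calc
    ρ ≤ (ρ - R + δ) + R := by linarith
    _ ≤ (1 / p' (R - δ) + R / p (R - δ)) * pdelta R δ Γ p p' ρ :=
      add_le_one_div_add_div_mul hp hp' hR (by linarith) (by linarith)

/-- Quantitative domination of the density by the approximate pressure above
the critical value: if moreover `p(R − δ) > 0`, then for every `ρ ≥ R`,
`ρ ≤ (1/p'(R − δ) + R/p(R − δ)) · p_δ(ρ)`. -/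
theorem density_dominated_by_pdelta
    (R δ Γ : ℝ) (hR : 0 < R) (hδ0 : 0 < δ) (hδR : δ < R) (hΓ : 2 < Γ)
    (p p' : ℝ → ℝ)
    (hderiv : ∀ ρ ∈ Set.Ico (0 : ℝ) R, HasDerivAt p (p' ρ) ρ)
    (hp'cont : ContinuousOn p' (Set.Ico 0 R))
    (hpnonneg : ∀ ρ ∈ Set.Ioo (0 : ℝ) R, 0 ≤ p ρ)
    (hp'pos : ∀ ρ ∈ Set.Ioo (0 : ℝ) R, 0 < p' ρ)
    (hppos : 0 < p (R - δ)) :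
    ∀ ρ : ℝ, R ≤ ρ →
      ρ ≤ (1 / p' (R - δ) + R / p (R - δ)) * pdelta R δ Γ p p' ρ := by
  intro ρ hρ
  exact density_dominated_by_pdelta_general Γ hR.le hδ0.le
    (hderiv _ ⟨by linarith, by linarith⟩) hppos (hp'pos _ ⟨by linarith, by linarith⟩) (by linarith)
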